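/- Let ϑ₁, ϑ₂, ϑ₃ be Beurling weights on ℝ^d and 1 < p, q, r < ∞. Assume ϑ₁ ≺ ϑ₂, ϑ₃ ≺ ϑ₂ and that ϑ₃(x)/ϑ₂(x) does not tend to zero as |x| → ∞. Then the inclusion map from A^{p,1,q,r}_{ϑ₁,ϑ₂}(ℝ^d) into (L^p_{ϑ₃}, ℓ¹) is never a compact operator: there exists a sequence bounded in ‖·‖_A with no subsequence converging in the norm ‖·‖_{p1,ϑ₃}. -/

import Mathlib

open MeasureTheory Filter Topology
open scoped ENNReal NNReal BigOperators

noncomputable section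

/-- The unit cube `α + [0,1)^d` at the integer point `α ∈ ℤ^d`. -/
def cube {d : ℕ} (α : Fin d → ℤ) : Set (Fin d → ℝ) :=
  Set.univ.pi fun i => Set.Ico (α i : ℝ) ((α i : ℝ) + 1)

/-- The weighted amalgam norm `‖f‖_{pq,ω}` of the space `(L^p_ω, ℓ^q)`. -/
def amalgamNorm {d : ℕ} (p q : ℝ) (ω : (Fin d → ℝ) → ℝ) (f : (Fin d → ℝ) → ℂ) : ℝ≥0∞ :=
  (∑' α : Fin d → ℤ,
      (eLpNorm (fun x => ω x • f x) (ENNReal.ofReal p) (volume.restrict (cube α))) ^ q) ^ (1 / q)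

/-- Membership in the weighted amalgam space `(L^p_ω, ℓ^q)`. -/
def MemAmalgam {d : ℕ} (p q : ℝ) (ω : (Fin d → ℝ) → ℝ) (f : (Fin d → ℝ) → ℂ) : Prop :=
  Measurable f ∧ amalgamNorm p q ω f < ⊤

/-- A Beurling weight: measurable, `ϑ ≥ 1` and submultiplicative. -/
def IsBeurling {d : ℕ} (ϑ : (Fin d → ℝ) → ℝ) : Prop :=
  Measurable ϑ ∧ (∀ x, 1 ≤ ϑ x) ∧ ∀ x y, ϑ (x + y) ≤ ϑ x * ϑ y

/-- The Fourier transform `f̂(ξ) = ∫ f(x) e^{-2πi⟨x,ξ⟩} dx`. -/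
def fourierT {d : ℕ} (f : (Fin d → ℝ) → ℂ) (ξ : Fin d → ℝ) : ℂ :=
  ∫ x : Fin d → ℝ,
    Complex.exp (-(2 * (Real.pi : ℂ) * Complex.I * ∑ i, (x i : ℂ) * (ξ i : ℂ))) * f x

/-- The norm of `A^{p,1,q,r}_{ϑ₁,ϑ₂}(ℝ^d)`. -/
def ANorm {d : ℕ} (p q r : ℝ) (ϑ₁ ϑ₂ : (Fin d → ℝ) → ℝ) (f : (Fin d → ℝ) → ℂ) : ℝ≥0∞ :=
  amalgamNorm p 1 ϑ₁ f + amalgamNorm q r ϑ₂ (fourierT f)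

/-- Membership in `A^{p,1,q,r}_{ϑ₁,ϑ₂}(ℝ^d)`. -/
def MemA {d : ℕ} (p q r : ℝ) (ϑ₁ ϑ₂ : (Fin d → ℝ) → ℝ) (f : (Fin d → ℝ) → ℂ) : Prop :=
  MemAmalgam p 1 ϑ₁ f ∧ MemAmalgam q r ϑ₂ (fourierT f)

/-- Convolution `(f∗g)(x) = ∫ f(x−t)g(t) dt`. -/
def convF {d : ℕ} (f g : (Fin d → ℝ) → ℂ) (x : Fin d → ℝ) : ℂ :=
  ∫ t : Fin d → ℝ, f (x - t) * g t

/-- `ϑ ≺ ϑ'` : domination of weights up to a constant. -/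
def Prec {d : ℕ} (ϑ ϑ' : (Fin d → ℝ) → ℝ) : Prop :=
  ∃ C : ℝ, 0 < C ∧ ∀ x, ϑ x ≤ C * ϑ' x

/-- The Beurling–Domar condition `∑_{n≥1} log ϑ(nx)/n² < ∞`. -/
def BeurlingDomar {d : ℕ} (ϑ : (Fin d → ℝ) → ℝ) : Prop :=
  ∀ x : Fin d → ℝ, Summable fun n : ℕ => Real.log (ϑ ((n : ℝ) • x)) / (n : ℝ) ^ 2

/-- `w` does not tend to zero as `|x| → ∞`. -/
def NotVanishingAtInfty {d : ℕ} (w : (Fin d → ℝ) → ℝ) : Prop :=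
  ∃ δ : ℝ, 0 < δ ∧ ∀ R : ℝ, 0 < R → ∃ x : Fin d → ℝ, R < ‖x‖ ∧ δ ≤ w x

end

/-!
The functions `f_a(x) = exp(-π|x - a|²) / ϑ₂(a)` with `|a| → ∞` defeat compactness. They are bounded
in the `A`-norm: a Beurling weight grows at most exponentially, so `ϑ₁(x) f_a(x)` is at most
`ϑ₁(a) / ϑ₂(a)` times a fixed rapidly decreasing function of `x - a`, and `|f̂_a|` is the fixed
Gaussian divided by `ϑ₂(a) ≥ 1`. On the other hand `∫ |ϑ₃ f_a|` over the unit ball around `a` is at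
least a constant times `ϑ₃(a) / ϑ₂(a)`, which stays away from zero along a suitable sequence
`a → ∞`. A limit `g` in `(L^p_{ϑ₃}, ℓ¹)` would make `ϑ₃ g` integrable, hence of vanishing mass on
these escaping balls.
-/

open Bornology Metric

/-! ### Submultiplicative functions -/

section Submultiplicative

lemma map_succ_nsmul_le_pow_of_submultiplicative {M : Type*} [AddMonoid M] {ϑ : M → ℝ}
    (h0 : ∀ x, 0 ≤ ϑ x) (hmul : ∀ x y, ϑ (x + y) ≤ ϑ x * ϑ y) (x : M) (n : ℕ) :
    ϑ ((n + 1) • x) ≤ ϑ x ^ (n + 1) := by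
  induction n with
  | zero => simp
  | succ n ih =>
    rw [succ_nsmul, pow_succ]
    exact (hmul _ _).trans (mul_le_mul_of_nonneg_right ih (h0 x))

-- Some sublevel set `S` of `x ↦ max (ϑ x) (ϑ (-x))` has positive measure, and Steinhaus' theorem
-- makes `S - S` a neighbourhood of the origin.
lemma exists_eventually_le_of_submultiplicative {G : Type*} [AddGroup G] [TopologicalSpace G]
    [IsTopologicalAddGroup G] [LocallyCompactSpace G] [MeasurableSpace G] [BorelSpace G]
    {ϑ : G → ℝ} (hmeas : Measurable ϑ) (h0 : ∀ x, 0 ≤ ϑ x)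
    (hmul : ∀ x y, ϑ (x + y) ≤ ϑ x * ϑ y) : ∃ K, ∀ᶠ x in 𝓝 0, ϑ x ≤ K := by
  let μ : Measure G := Measure.addHaar
  obtain ⟨U, hU0, hUopen, hUfin⟩ := μ.exists_isOpen_measure_lt_top 0
  let S : ℕ → Set G := fun n ↦ {x | ϑ x ≤ n ∧ ϑ (-x) ≤ n} ∩ U
  have hS : ∀ n, MeasurableSet (S n) := fun n ↦
    ((measurableSet_le hmeas measurable_const).inter
      (measurableSet_le (hmeas.comp measurable_neg) measurable_const)).inter hUopen.measurableSet
  have hcover : U ⊆ ⋃ n, S n := fun x hx ↦ by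
    obtain ⟨n, hn⟩ := exists_nat_ge (max (ϑ x) (ϑ (-x)))
    exact Set.mem_iUnion.2 ⟨n, max_le_iff.1 hn, hx⟩
  obtain ⟨n, hn⟩ : ∃ n, 0 < μ (S n) := by
    by_contra! hnull
    exact hUopen.measure_ne_zero μ ⟨0, hU0⟩ <| measure_mono_null hcover <|
      measure_iUnion_null fun n ↦ nonpos_iff_eq_zero.1 (hnull n)
  have hfin : μ (S n) ≠ ⊤ := ((measure_mono Set.inter_subset_right).trans_lt hUfin).ne
  refine ⟨n * n, ?_⟩
  filter_upwards [μ.sub_mem_nhds_zero_of_addHaar_pos_ne_top (S n) (hS n) hn hfin]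
  rintro _ ⟨x, ⟨⟨hx, -⟩, -⟩, y, ⟨⟨-, hy⟩, -⟩, rfl⟩
  calc ϑ (x - y) ≤ ϑ x * ϑ (-y) := sub_eq_add_neg x y ▸ hmul x (-y)
    _ ≤ n * n := mul_le_mul hx hy (h0 _) n.cast_nonneg

lemma exists_le_mul_exp_of_submultiplicative {E : Type*} [SeminormedAddCommGroup E]
    [NormedSpace ℝ E] {ϑ : E → ℝ} {K : ℝ} (h0 : ∀ x, 0 ≤ ϑ x)
    (hmul : ∀ x y, ϑ (x + y) ≤ ϑ x * ϑ y) (hK : ∀ᶠ x in 𝓝 0, ϑ x ≤ K) :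
    ∃ C a, 0 < C ∧ ∀ x, ϑ x ≤ C * Real.exp (a * ‖x‖) := by
  obtain ⟨ε, hε, hball⟩ := Metric.eventually_nhds_iff.1 hK
  set L := max K 1
  have hL : 0 < L := zero_lt_one.trans_le (le_max_right _ _)
  have hlog : 0 ≤ Real.log L := Real.log_nonneg (le_max_right _ _)
  refine ⟨L, Real.log L / ε, hL, fun x ↦ ?_⟩
  set n := ⌊‖x‖ / ε⌋₊
  have hn : (0 : ℝ) < (n + 1 : ℕ) := by positivity
  set y := ((n + 1 : ℕ) : ℝ)⁻¹ • x
  have hxy : (n + 1) • y = x := by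
    rw [← Nat.cast_smul_eq_nsmul ℝ, smul_inv_smul₀ hn.ne']
  have hy : ‖y‖ < ε := by
    rw [norm_smul, norm_inv, Real.norm_natCast, inv_mul_lt_iff₀ hn, ← div_lt_iff₀ hε]
    exact_mod_cast Nat.lt_floor_add_one (‖x‖ / ε)
  have hϑy : ϑ y ≤ L := (hball (by simpa using hy)).trans (le_max_left _ _)
  calc ϑ x ≤ ϑ y ^ (n + 1) := hxy ▸ map_succ_nsmul_le_pow_of_submultiplicative h0 hmul y n
    _ ≤ L ^ (n + 1) := pow_le_pow_left₀ (h0 y) hϑy _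
    _ = L * Real.exp (n * Real.log L) := by
        rw [Real.exp_nat_mul, Real.exp_log hL, pow_succ, mul_comm]
    _ ≤ L * Real.exp (‖x‖ / ε * Real.log L) := by
        gcongr
        exact Nat.floor_le (by positivity)
    _ = L * Real.exp (Real.log L / ε * ‖x‖) := by ring_nf

end Submultiplicative

namespace IsBeurling

variable {d : ℕ} {ϑ : (Fin d → ℝ) → ℝ}

lemma pos (h : IsBeurling ϑ) (x : Fin d → ℝ) : 0 < ϑ x :=
  zero_lt_one.trans_le (h.2.1 x)

lemma le_mul_sub (h : IsBeurling ϑ) (x y : Fin d → ℝ) : ϑ x ≤ ϑ y * ϑ (x - y) := by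
  simpa using h.2.2 y (x - y)

lemma exists_le_mul_exp (h : IsBeurling ϑ) :
    ∃ C a, 0 < C ∧ ∀ x, ϑ x ≤ C * Real.exp (a * ‖x‖) := by
  have h0 : ∀ x, 0 ≤ ϑ x := fun x ↦ (h.pos x).le
  obtain ⟨K, hK⟩ := exists_eventually_le_of_submultiplicative h.1 h0 h.2.2
  exact exists_le_mul_exp_of_submultiplicative h0 h.2.2 hK

end IsBeurling

/-! ### The standard Gaussian -/

section Gaussian

variable {ι : Type*} [Fintype ι]

lemma norm_sq_le_sum_sq (x : ι → ℝ) : ‖x‖ ^ 2 ≤ ∑ i, x i ^ 2 := by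
  have hsum : 0 ≤ ∑ i, x i ^ 2 := Finset.sum_nonneg fun i _ ↦ sq_nonneg (x i)
  rw [← Real.le_sqrt (norm_nonneg x) hsum, pi_norm_le_iff_of_nonneg (Real.sqrt_nonneg _)]
  exact fun i ↦ Real.abs_le_sqrt <|
    Finset.single_le_sum (f := fun j ↦ x j ^ 2) (fun j _ ↦ sq_nonneg _) (Finset.mem_univ i)

/-- The standard Gaussian `exp(-π|x|²)`, where `|x|` is the Euclidean norm: it is written out as a
sum of squares because `ι → ℝ` carries the supremum norm. -/
noncomputable def gaussian (x : ι → ℝ) : ℝ :=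
  Real.exp (-Real.pi * ∑ i, x i ^ 2)

lemma gaussian_pos (x : ι → ℝ) : 0 < gaussian x :=
  Real.exp_pos _

lemma measurable_gaussian : Measurable (gaussian : (ι → ℝ) → ℝ) := by
  unfold gaussian
  fun_prop

lemma exp_mul_norm_mul_gaussian_le (a : ℝ) (x : ι → ℝ) :
    Real.exp (a * ‖x‖) * gaussian x ≤ Real.exp (a ^ 2 / 4) := by
  rw [gaussian, ← Real.exp_add, Real.exp_le_exp]
  have hsum : ‖x‖ ^ 2 ≤ Real.pi * ∑ i, x i ^ 2 :=
    (norm_sq_le_sum_sq x).trans <| le_mul_of_one_le_left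
      (Finset.sum_nonneg fun i _ ↦ sq_nonneg (x i)) (by linarith [Real.pi_gt_three])
  linarith [sq_nonneg (‖x‖ - a / 2)]

end Gaussian

lemma IsBeurling.exists_mul_gaussian_le {d : ℕ} {ϑ : (Fin d → ℝ) → ℝ} (h : IsBeurling ϑ) :
    ∃ K, ∀ x, ϑ x * gaussian x ≤ K * Real.exp (-‖x‖) := by
  obtain ⟨C, a, hC, hϑ⟩ := h.exists_le_mul_exp
  refine ⟨C * Real.exp ((a + 1) ^ 2 / 4), fun x ↦ ?_⟩
  calc ϑ x * gaussian x ≤ C * Real.exp (a * ‖x‖) * gaussian x :=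
        mul_le_mul_of_nonneg_right (hϑ x) (gaussian_pos x).le
    _ = C * (Real.exp ((a + 1) * ‖x‖) * gaussian x) * Real.exp (-‖x‖) := by
        rw [show a * ‖x‖ = (a + 1) * ‖x‖ + -‖x‖ by ring, Real.exp_add]
        ring
    _ ≤ C * Real.exp ((a + 1) ^ 2 / 4) * Real.exp (-‖x‖) := by
        gcongr
        exact exp_mul_norm_mul_gaussian_le (a + 1) x

/-! ### The Fourier transform -/

section Fourier

variable {d : ℕ}

lemma measurable_fourierT {f : (Fin d → ℝ) → ℂ} (hf : Measurable f) : Measurable (fourierT f) := by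
  have hint : Measurable fun z : (Fin d → ℝ) × (Fin d → ℝ) ↦
      Complex.exp (-(2 * (Real.pi : ℂ) * Complex.I * ∑ i, (z.2 i : ℂ) * (z.1 i : ℂ))) * f z.2 := by
    fun_prop
  exact hint.stronglyMeasurable.integral_prod_right.measurable

lemma fourierT_div_const (f : (Fin d → ℝ) → ℂ) (c : ℂ) (ξ : Fin d → ℝ) :
    fourierT (fun x ↦ f x / c) ξ = fourierT f ξ / c := by
  simp only [fourierT, ← mul_div_assoc, integral_div]

lemma fourierT_comp_sub_right (f : (Fin d → ℝ) → ℂ) (a ξ : Fin d → ℝ) :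
    fourierT (fun x ↦ f (x - a)) ξ =
      Complex.exp ((-(2 * Real.pi * ∑ i, a i * ξ i) : ℝ) * Complex.I) * fourierT f ξ := by
  rw [fourierT, fourierT, ← integral_const_mul, ← integral_add_right_eq_self _ a]
  refine integral_congr_ae (.of_forall fun x ↦ ?_)
  simp only [add_sub_cancel_right, ← mul_assoc, ← Complex.exp_add]
  congr 2
  push_cast [Pi.add_apply, add_mul, Finset.sum_add_distrib]
  ring

lemma norm_fourierT_comp_sub_right (f : (Fin d → ℝ) → ℂ) (a ξ : Fin d → ℝ) :
    ‖fourierT (fun x ↦ f (x - a)) ξ‖ = ‖fourierT f ξ‖ := by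
  rw [fourierT_comp_sub_right, norm_mul, Complex.norm_exp_ofReal_mul_I, one_mul]

lemma fourierT_gaussian (ξ : Fin d → ℝ) : fourierT (fun x ↦ (gaussian x : ℂ)) ξ = gaussian ξ := by
  have hpi : (Real.pi : ℂ) ≠ 0 := mod_cast Real.pi_ne_zero
  have key := GaussianFourier.integral_cexp_neg_mul_sum_add (b := Real.pi) (by simp [Real.pi_pos])
    (fun i : Fin d ↦ -(2 * Real.pi * Complex.I * ξ i))
  calc fourierT (fun x ↦ (gaussian x : ℂ)) ξ
      = ∫ x : Fin d → ℝ, Complex.exp (-Real.pi * ∑ i, (x i : ℂ) ^ 2 +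
          ∑ i, -(2 * Real.pi * Complex.I * ξ i) * x i) := by
        refine integral_congr_ae (.of_forall fun x ↦ ?_)
        simp only [gaussian]
        push_cast
        rw [← Complex.exp_add, add_comm, Finset.mul_sum (a := 2 * (Real.pi : ℂ) * Complex.I),
          ← Finset.sum_neg_distrib]
        congr! 3
        ring
    _ = gaussian ξ := by
        rw [key, div_self hpi, Complex.one_cpow, one_mul, gaussian]
        push_cast
        simp only [Finset.sum_div, Finset.mul_sum]
        congr! 2
        field_simp
        rw [Complex.I_sq]
        ring

end Fourier

/-! ### Amalgam norms -/

section Cube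

variable {d : ℕ} {α : Fin d → ℤ}

lemma mem_cube_iff_floor_eq {x : Fin d → ℝ} : x ∈ cube α ↔ (fun i ↦ ⌊x i⌋) = α := by
  simp only [cube, Set.mem_univ_pi, Set.mem_Ico, funext_iff, Int.floor_eq_iff]

lemma measurableSet_cube (α : Fin d → ℤ) : MeasurableSet (cube α) :=
  MeasurableSet.univ_pi fun _ ↦ measurableSet_Ico

lemma volume_cube (α : Fin d → ℤ) : volume (cube α) = 1 := by
  simp [cube, Real.volume_pi_Ico]

instance (α : Fin d → ℤ) : IsProbabilityMeasure (volume.restrict (cube α)) :=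
  ⟨by rw [Measure.restrict_apply_univ, volume_cube]⟩

lemma tsum_setLIntegral_cube (F : (Fin d → ℝ) → ℝ≥0∞) :
    ∑' α, ∫⁻ x in cube α, F x = ∫⁻ x, F x := by
  have hdisj : Pairwise (Function.onFun Disjoint (cube (d := d))) := fun α β hαβ ↦
    Set.disjoint_left.2 fun x hα hβ ↦
      hαβ ((mem_cube_iff_floor_eq.1 hα).symm.trans (mem_cube_iff_floor_eq.1 hβ))
  have hcover : ⋃ α, cube (d := d) α = Set.univ :=
    Set.iUnion_eq_univ_iff.2 fun x ↦ ⟨fun i ↦ ⌊x i⌋, mem_cube_iff_floor_eq.2 rfl⟩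
  rw [← lintegral_iUnion measurableSet_cube hdisj, hcover, Measure.restrict_univ]

lemma norm_sub_le_one_of_mem_cube {x y : Fin d → ℝ} (hx : x ∈ cube α) (hy : y ∈ cube α) :
    ‖x - y‖ ≤ 1 := by
  have hfloor := (mem_cube_iff_floor_eq.1 hx).trans (mem_cube_iff_floor_eq.1 hy).symm
  exact (pi_norm_le_iff_of_nonneg zero_le_one).2 fun i ↦
    (Int.abs_sub_lt_one_of_floor_eq_floor (congrFun hfloor i)).le

end Cube

lemma integrable_exp_neg_mul_norm {E : Type*} [NormedAddCommGroup E] [NormedSpace ℝ E]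
    [FiniteDimensional ℝ E] [MeasurableSpace E] [BorelSpace E] (μ : Measure E)
    [μ.IsAddHaarMeasure] {s : ℝ} (hs : 0 < s) :
    Integrable (fun x : E ↦ Real.exp (-(s * ‖x‖))) μ := by
  set n := Module.finrank ℝ E + 1
  have hJapanese := integrable_one_add_norm (μ := μ) (r := n) (by simp [n])
  refine (hJapanese.const_mul (Real.exp s * n.factorial / s ^ n)).mono'
    (by fun_prop) (.of_forall fun x ↦ ?_)
  have hx : 0 < 1 + ‖x‖ := by positivity
  have hpow : (s * (1 + ‖x‖)) ^ n ≤ Real.exp (s + s * ‖x‖) * n.factorial := by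
    rw [← div_le_iff₀ (by positivity), ← mul_one_add s]
    exact Real.pow_div_factorial_le_exp _ (by positivity) n
  rw [Real.norm_of_nonneg (Real.exp_pos _).le, Real.rpow_neg hx.le, Real.rpow_natCast,
    ← div_eq_mul_inv, div_div, ← mul_pow, le_div_iff₀ (by positivity)]
  calc Real.exp (-(s * ‖x‖)) * (s * (1 + ‖x‖)) ^ n
      ≤ Real.exp (-(s * ‖x‖)) * (Real.exp (s + s * ‖x‖) * n.factorial) := by gcongr
    _ = Real.exp s * n.factorial := by
        rw [← mul_assoc, ← Real.exp_add]
        ring_nf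

section Amalgam

variable {d : ℕ} {ω : (Fin d → ℝ) → ℝ} {f : (Fin d → ℝ) → ℂ}

lemma lintegral_enorm_smul_le_amalgamNorm_one {p : ℝ} (hp : 1 ≤ p) (hω : Measurable ω)
    (hf : Measurable f) : ∫⁻ x, ‖ω x • f x‖ₑ ≤ amalgamNorm p 1 ω f := by
  rw [← tsum_setLIntegral_cube, amalgamNorm]
  simp only [ENNReal.rpow_one, div_one]
  refine ENNReal.tsum_le_tsum fun α ↦ ?_
  rw [← eLpNorm_one_eq_lintegral_enorm]
  exact eLpNorm_le_eLpNorm_of_exponent_le (ENNReal.one_le_ofReal.2 hp)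
    (hω.smul hf).aestronglyMeasurable

lemma eLpNorm_restrict_cube_le_of_norm_le_exp {F : Type*} [NormedAddCommGroup F]
    {h : (Fin d → ℝ) → F} {K : ℝ} {c y : Fin d → ℝ} {α : Fin d → ℤ}
    (hh : ∀ x, ‖h x‖ ≤ K * Real.exp (-‖x - c‖)) (hy : y ∈ cube α) (p : ℝ≥0∞) :
    eLpNorm h p (volume.restrict (cube α)) ≤
      ENNReal.ofReal (K * Real.exp 1) * ENNReal.ofReal (Real.exp (-‖y - c‖)) := by
  have hK : 0 ≤ K := nonneg_of_mul_nonneg_left ((norm_nonneg _).trans (hh y)) (Real.exp_pos _)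
  have hbound : ∀ x ∈ cube α, ‖h x‖ ≤ K * Real.exp 1 * Real.exp (-‖y - c‖) := fun x hx ↦ by
    rw [mul_assoc, ← Real.exp_add]
    refine (hh x).trans ?_
    gcongr
    linarith [norm_sub_le_one_of_mem_cube hy hx, norm_sub_le_norm_sub_add_norm_sub y x c]
  have hle := eLpNorm_le_of_ae_bound (p := p) (μ := volume.restrict (cube α)) <|
    ae_restrict_of_forall_mem (measurableSet_cube α) hbound
  rwa [measure_univ, ENNReal.one_rpow, one_mul, ENNReal.ofReal_mul (by positivity)] at hle

lemma amalgamNorm_le_of_norm_le_exp (p : ℝ) {s K : ℝ} {c : Fin d → ℝ} (hs : 0 < s)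
    (hf : ∀ x, ‖ω x • f x‖ ≤ K * Real.exp (-‖x - c‖)) :
    amalgamNorm p s ω f ≤ ENNReal.ofReal (K * Real.exp 1) *
      (∫⁻ x : Fin d → ℝ, ENNReal.ofReal (Real.exp (-(s * ‖x‖)))) ^ (1 / s) := by
  set L := ENNReal.ofReal (K * Real.exp 1)
  have hcube : ∀ α : Fin d → ℤ,
      eLpNorm (fun x ↦ ω x • f x) (ENNReal.ofReal p) (volume.restrict (cube α)) ^ s ≤
        ∫⁻ y in cube α, L ^ s * ENNReal.ofReal (Real.exp (-(s * ‖y - c‖))) := fun α ↦ by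
    rw [← mul_one (_ ^ s), ← measure_univ (μ := volume.restrict (cube α)), ← lintegral_const]
    refine setLIntegral_mono' (measurableSet_cube α) fun y hy ↦ ?_
    calc eLpNorm (fun x ↦ ω x • f x) (ENNReal.ofReal p) (volume.restrict (cube α)) ^ s
        ≤ (L * ENNReal.ofReal (Real.exp (-‖y - c‖))) ^ s := by
          gcongr
          exact eLpNorm_restrict_cube_le_of_norm_le_exp hf hy _
      _ = L ^ s * ENNReal.ofReal (Real.exp (-(s * ‖y - c‖))) := by
          rw [ENNReal.mul_rpow_of_nonneg _ _ hs.le,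
            ENNReal.ofReal_rpow_of_nonneg (Real.exp_pos _).le hs.le, ← Real.exp_mul, neg_mul,
            mul_comm s]
  calc amalgamNorm p s ω f
      ≤ (∑' α, ∫⁻ y in cube α, L ^ s * ENNReal.ofReal (Real.exp (-(s * ‖y - c‖)))) ^ (1 / s) := by
        rw [amalgamNorm]
        gcongr with α
        exact hcube α
    _ = (L ^ s * ∫⁻ x : Fin d → ℝ, ENNReal.ofReal (Real.exp (-(s * ‖x‖)))) ^ (1 / s) := by
        rw [tsum_setLIntegral_cube, lintegral_const_mul' _ _ (by finiteness),
          lintegral_sub_right_eq_self fun y ↦ ENNReal.ofReal (Real.exp (-(s * ‖y‖)))]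
    _ = L * (∫⁻ x : Fin d → ℝ, ENNReal.ofReal (Real.exp (-(s * ‖x‖)))) ^ (1 / s) := by
        rw [ENNReal.mul_rpow_of_nonneg _ _ (by positivity), ← ENNReal.rpow_mul,
          mul_one_div_cancel hs.ne', ENNReal.rpow_one]

lemma exists_amalgamNorm_le_of_norm_le_exp (p : ℝ) {s : ℝ} (hs : 0 < s) (K : ℝ) :
    ∃ M : ℝ≥0, ∀ (ω : (Fin d → ℝ) → ℝ) (f : (Fin d → ℝ) → ℂ) (c : Fin d → ℝ),
      (∀ x, ‖ω x • f x‖ ≤ K * Real.exp (-‖x - c‖)) → amalgamNorm p s ω f ≤ M := by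
  have hfin := (integrable_exp_neg_mul_norm (volume : Measure (Fin d → ℝ)) hs).lintegral_lt_top
  lift ENNReal.ofReal (K * Real.exp 1) *
    (∫⁻ x : Fin d → ℝ, ENNReal.ofReal (Real.exp (-(s * ‖x‖)))) ^ (1 / s) to ℝ≥0
    using by finiteness with M hM
  exact ⟨M, fun ω f c hf ↦ hM ▸ amalgamNorm_le_of_norm_le_exp p hs hf⟩

lemma memA_iff {p q r : ℝ} {ϑ₁ ϑ₂ : (Fin d → ℝ) → ℝ} :
    MemA p q r ϑ₁ ϑ₂ f ↔ Measurable f ∧ ANorm p q r ϑ₁ ϑ₂ f < ⊤ := by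
  rw [MemA, MemAmalgam, MemAmalgam, ANorm, ENNReal.add_lt_top]
  exact ⟨fun h ↦ ⟨h.1.1, h.1.2, h.2.2⟩, fun h ↦ ⟨⟨h.1, h.2.1⟩, measurable_fourierT h.1, h.2.2⟩⟩

end Amalgam

/-! ### Normalized translates of the Gaussian -/

/-- The Gaussian centred at `a`, divided by the value at `a` of the weight `ϑ`. -/
noncomputable def normalizedGaussian {d : ℕ} (ϑ : (Fin d → ℝ) → ℝ) (a x : Fin d → ℝ) : ℂ :=
  gaussian (x - a) / ϑ a

section NormalizedGaussian

variable {d : ℕ} {ϑ ϑ' : (Fin d → ℝ) → ℝ}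

lemma measurable_normalizedGaussian (ϑ : (Fin d → ℝ) → ℝ) (a : Fin d → ℝ) :
    Measurable (normalizedGaussian ϑ a) :=
  (Complex.measurable_ofReal.comp (measurable_gaussian.comp (measurable_sub_const a))).div_const _

lemma norm_normalizedGaussian {a : Fin d → ℝ} (ha : 0 ≤ ϑ a) (x : Fin d → ℝ) :
    ‖normalizedGaussian ϑ a x‖ = gaussian (x - a) / ϑ a := by
  rw [normalizedGaussian, norm_div, Complex.norm_of_nonneg (gaussian_pos _).le,
    Complex.norm_of_nonneg ha]

lemma norm_fourierT_normalizedGaussian {a : Fin d → ℝ} (ha : 0 ≤ ϑ a) (ξ : Fin d → ℝ) :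
    ‖fourierT (normalizedGaussian ϑ a) ξ‖ = gaussian ξ / ϑ a := by
  unfold normalizedGaussian
  rw [fourierT_div_const, norm_div, norm_fourierT_comp_sub_right (fun x ↦ (gaussian x : ℂ)),
    fourierT_gaussian, Complex.norm_of_nonneg (gaussian_pos _).le, Complex.norm_of_nonneg ha]

lemma exists_amalgamNorm_normalizedGaussian_le (p : ℝ) {s : ℝ} (hs : 0 < s) (h : IsBeurling ϑ)
    (hϑ' : ∀ x, 0 < ϑ' x) (hprec : Prec ϑ ϑ') :
    ∃ M : ℝ≥0, ∀ a, amalgamNorm p s ϑ (normalizedGaussian ϑ' a) ≤ M := by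
  obtain ⟨C, hC, hle⟩ := hprec
  obtain ⟨K, hK⟩ := h.exists_mul_gaussian_le
  obtain ⟨M, hM⟩ := exists_amalgamNorm_le_of_norm_le_exp (d := d) p hs (C * K)
  refine ⟨M, fun a ↦ hM _ _ a fun x ↦ ?_⟩
  have hratio : ϑ a / ϑ' a ≤ C := (div_le_iff₀ (hϑ' a)).2 (hle a)
  have hg := gaussian_pos (x - a)
  have hpos := h.pos (x - a)
  rw [norm_smul, norm_normalizedGaussian (hϑ' a).le, Real.norm_of_nonneg (h.pos x).le]
  calc ϑ x * (gaussian (x - a) / ϑ' a)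
      ≤ ϑ a * ϑ (x - a) * (gaussian (x - a) / ϑ' a) :=
        mul_le_mul_of_nonneg_right (h.le_mul_sub x a) (div_pos hg (hϑ' a)).le
    _ = ϑ a / ϑ' a * (ϑ (x - a) * gaussian (x - a)) := by ring
    _ ≤ C * (K * Real.exp (-‖x - a‖)) := mul_le_mul hratio (hK _) (by positivity) hC.le
    _ = C * K * Real.exp (-‖x - a‖) := (mul_assoc _ _ _).symm

lemma exists_amalgamNorm_fourierT_normalizedGaussian_le (q : ℝ) {s : ℝ} (hs : 0 < s)
    (h : IsBeurling ϑ) :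
    ∃ M : ℝ≥0, ∀ a, amalgamNorm q s ϑ (fourierT (normalizedGaussian ϑ a)) ≤ M := by
  obtain ⟨K, hK⟩ := h.exists_mul_gaussian_le
  obtain ⟨M, hM⟩ := exists_amalgamNorm_le_of_norm_le_exp (d := d) q hs K
  refine ⟨M, fun a ↦ hM _ _ 0 fun ξ ↦ ?_⟩
  rw [norm_smul, norm_fourierT_normalizedGaussian (h.pos a).le, Real.norm_of_nonneg (h.pos ξ).le,
    sub_zero]
  exact (mul_le_mul_of_nonneg_left (div_le_self (gaussian_pos ξ).le (h.2.1 a)) (h.pos ξ).le).trans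
    (hK ξ)

lemma exists_ANorm_normalizedGaussian_le (p q : ℝ) {r : ℝ} (hr : 0 < r) (h : IsBeurling ϑ)
    (h' : IsBeurling ϑ') (hprec : Prec ϑ ϑ') :
    ∃ M : ℝ≥0, ∀ a, ANorm p q r ϑ ϑ' (normalizedGaussian ϑ' a) ≤ M := by
  obtain ⟨M₁, hM₁⟩ := exists_amalgamNorm_normalizedGaussian_le p zero_lt_one h h'.pos hprec
  obtain ⟨M₂, hM₂⟩ := exists_amalgamNorm_fourierT_normalizedGaussian_le q hr h'
  exact ⟨M₁ + M₂, fun a ↦ by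
    rw [ENNReal.coe_add]
    exact add_le_add (hM₁ a) (hM₂ a)⟩

lemma exists_mul_le_setLIntegral_ball_normalizedGaussian (h : IsBeurling ϑ)
    (hϑ' : ∀ x, 0 < ϑ' x) {ρ : ℝ} (hρ : 0 < ρ) :
    ∃ c : ℝ≥0∞, 0 < c ∧ ∀ a, ENNReal.ofReal (ϑ a / ϑ' a) * c ≤
      ∫⁻ x in ball a ρ, ‖ϑ x • normalizedGaussian ϑ' a x‖ₑ := by
  let F : (Fin d → ℝ) → ℝ≥0∞ := fun t ↦ ENNReal.ofReal (gaussian t / ϑ (-t))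
  have hF : Measurable F :=
    (measurable_gaussian.div (h.1.comp measurable_neg)).ennreal_ofReal
  have hFpos : ∀ t, 0 < F t := fun t ↦ ENNReal.ofReal_pos.2 (div_pos (gaussian_pos t) (h.pos _))
  refine ⟨∫⁻ t in ball 0 ρ, F t, ?_, fun a ↦ ?_⟩
  · have hsupp : Function.support F = Set.univ := Set.eq_univ_of_forall fun t ↦ (hFpos t).ne'
    rw [setLIntegral_pos_iff hF, hsupp, Set.univ_inter]
    exact measure_ball_pos _ _ hρ
  have htranslate : ∫⁻ t in ball 0 ρ, F t = ∫⁻ x in ball a ρ, F (x - a) := by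
    rw [← (measurePreserving_sub_right volume a).setLIntegral_comp_preimage measurableSet_ball hF]
    congr! 3
    ext x
    simp [dist_eq_norm]
  rw [htranslate, ← lintegral_const_mul' _ _ (by finiteness)]
  refine lintegral_mono fun x ↦ ?_
  have hx := h.le_mul_sub a x
  have hpos := h.pos (a - x)
  have hg := gaussian_pos (x - a)
  have ha := hϑ' a
  rw [← ENNReal.ofReal_mul (div_pos (h.pos a) ha).le, ← ofReal_norm, norm_smul,
    norm_normalizedGaussian ha.le, Real.norm_of_nonneg (h.pos x).le, neg_sub]
  refine ENNReal.ofReal_le_ofReal ?_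
  calc ϑ a / ϑ' a * (gaussian (x - a) / ϑ (a - x))
      = ϑ a / ϑ (a - x) * (gaussian (x - a) / ϑ' a) := by ring
    _ ≤ ϑ x * (gaussian (x - a) / ϑ' a) := by
        gcongr
        exact (div_le_iff₀ hpos).2 hx

end NormalizedGaussian

/-! ### Mass escaping to infinity -/

section EscapingMass

variable {X ι : Type*} [PseudoMetricSpace X] [MeasurableSpace X] [OpensMeasurableSpace X]
  {μ : Measure X} {l : Filter ι} [l.IsCountablyGenerated] {a : ι → X}

lemma tendsto_setLIntegral_ball_of_tendsto_cobounded {G : X → ℝ≥0∞} (hG : AEMeasurable G μ)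
    (hfin : ∫⁻ x, G x ∂μ ≠ ⊤) (ha : Tendsto a l (cobounded X)) (ρ : ℝ) :
    Tendsto (fun i ↦ ∫⁻ x in ball (a i) ρ, G x ∂μ) l (𝓝 0) := by
  have hescape : ∀ x, ∀ᶠ i in l, x ∉ ball (a i) ρ := fun x ↦ by
    filter_upwards [ha isBounded_ball.compl] with i hi
    rwa [mem_ball_comm]
  have hlim : ∀ x, Tendsto (fun i ↦ (ball (a i) ρ).indicator G x) l (𝓝 0) := fun x ↦
    tendsto_const_nhds.congr' <| (hescape x).mono fun i hi ↦ (Set.indicator_of_notMem hi G).symm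
  simpa only [lintegral_indicator measurableSet_ball, lintegral_zero] using
    tendsto_lintegral_filter_of_dominated_convergence' (F := fun i ↦ (ball (a i) ρ).indicator G) G
      (.of_forall fun i ↦ hG.indicator measurableSet_ball)
      (.of_forall fun i ↦ .of_forall fun x ↦ Set.indicator_le_self _ _ _) hfin (.of_forall hlim)

lemma not_tendsto_lintegral_enorm_sub_of_le_setLIntegral_ball [l.NeBot] {E : Type*}
    [NormedAddCommGroup E] {F : ι → X → E} {g : X → E} (hg : Integrable g μ)
    (ha : Tendsto a l (cobounded X)) {c : ℝ≥0∞} (hc : 0 < c) {ρ : ℝ}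
    (hF : ∀ i, c ≤ ∫⁻ x in ball (a i) ρ, ‖F i x‖ₑ ∂μ) :
    ¬ Tendsto (fun i ↦ ∫⁻ x, ‖F i x - g x‖ₑ ∂μ) l (𝓝 0) := by
  intro hlim
  have hsplit : ∀ i, c ≤ ∫⁻ x, ‖F i x - g x‖ₑ ∂μ + ∫⁻ x in ball (a i) ρ, ‖g x‖ₑ ∂μ := fun i ↦
    calc c ≤ ∫⁻ x in ball (a i) ρ, ‖F i x‖ₑ ∂μ := hF i
      _ ≤ ∫⁻ x in ball (a i) ρ, (‖F i x - g x‖ₑ + ‖g x‖ₑ) ∂μ := lintegral_mono fun x ↦ by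
          simpa using enorm_add_le (F i x - g x) (g x)
      _ = ∫⁻ x in ball (a i) ρ, ‖F i x - g x‖ₑ ∂μ + ∫⁻ x in ball (a i) ρ, ‖g x‖ₑ ∂μ :=
          lintegral_add_right' _ hg.1.enorm.restrict
      _ ≤ ∫⁻ x, ‖F i x - g x‖ₑ ∂μ + ∫⁻ x in ball (a i) ρ, ‖g x‖ₑ ∂μ :=
          add_le_add_left (setLIntegral_le_lintegral _ _) _
  have htail := tendsto_setLIntegral_ball_of_tendsto_cobounded hg.1.enorm hg.2.ne ha ρ
  exact hc.not_ge <| by simpa using ge_of_tendsto' (hlim.add htail) hsplit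

end EscapingMass

lemma NotVanishingAtInfty.exists_seq {d : ℕ} {w : (Fin d → ℝ) → ℝ} (hw : NotVanishingAtInfty w) :
    ∃ δ > 0, ∃ a : ℕ → Fin d → ℝ, Tendsto a atTop (cobounded _) ∧ ∀ n, δ ≤ w (a n) := by
  obtain ⟨δ, hδ, hlarge⟩ := hw
  choose a ha hwa using fun n : ℕ ↦ hlarge (n + 1) n.cast_add_one_pos
  refine ⟨δ, hδ, a, tendsto_norm_atTop_iff_cobounded.1 ?_, hwa⟩
  exact tendsto_atTop_mono (fun n ↦ ((lt_add_one _).trans (ha n)).le) tendsto_natCast_atTop_atTop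

theorem A_embedding_never_compact'_general {d : ℕ} (p q r : ℝ) (hp : 1 ≤ p) (_hq : 0 < q)
    (hr : 0 < r) (ϑ₁ ϑ₂ ϑ₃ : (Fin d → ℝ) → ℝ)
    (h1 : IsBeurling ϑ₁) (h2 : IsBeurling ϑ₂) (h3 : IsBeurling ϑ₃) (h12 : Prec ϑ₁ ϑ₂)
    (hnv : NotVanishingAtInfty (fun x ↦ ϑ₃ x / ϑ₂ x)) :
    ∃ f : ℕ → (Fin d → ℝ) → ℂ,
      (∀ n, MemA p q r ϑ₁ ϑ₂ (f n)) ∧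
      (∃ M : ℝ, ∀ n, ANorm p q r ϑ₁ ϑ₂ (f n) ≤ ENNReal.ofReal M) ∧
      ¬ ∃ (φ : ℕ → ℕ) (g : (Fin d → ℝ) → ℂ), StrictMono φ ∧ MemAmalgam p 1 ϑ₃ g ∧
          Tendsto (fun k ↦ amalgamNorm p 1 ϑ₃ (fun x ↦ f (φ k) x - g x)) atTop (𝓝 0) := by
  obtain ⟨δ, hδ, a, ha, hδa⟩ := hnv.exists_seq
  obtain ⟨M, hM⟩ := exists_ANorm_normalizedGaussian_le p q hr h1 h2 h12
  obtain ⟨c, hc, hmass⟩ := exists_mul_le_setLIntegral_ball_normalizedGaussian h3 h2.pos one_pos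
  have hmeas := fun n ↦ measurable_normalizedGaussian ϑ₂ (a n)
  refine ⟨fun n ↦ normalizedGaussian ϑ₂ (a n),
    fun n ↦ memA_iff.2 ⟨hmeas n, (hM _).trans_lt ENNReal.coe_lt_top⟩,
    ⟨M, fun n ↦ by simpa using hM (a n)⟩, ?_⟩
  rintro ⟨φ, g, hφ, ⟨hg, hgfin⟩, hlim⟩
  have hint : Integrable (fun x ↦ ϑ₃ x • g x) := ⟨(h3.1.smul hg).aestronglyMeasurable,
    (lintegral_enorm_smul_le_amalgamNorm_one hp h3.1 hg).trans_lt hgfin⟩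
  have hlim' : Tendsto (fun k ↦ ∫⁻ x, ‖ϑ₃ x • normalizedGaussian ϑ₂ (a (φ k)) x - ϑ₃ x • g x‖ₑ)
      atTop (𝓝 0) := by
    simp only [← smul_sub]
    exact tendsto_of_tendsto_of_tendsto_of_le_of_le tendsto_const_nhds hlim (fun _ ↦ zero_le)
      fun k ↦ lintegral_enorm_smul_le_amalgamNorm_one hp h3.1 ((hmeas (φ k)).sub hg)
  refine not_tendsto_lintegral_enorm_sub_of_le_setLIntegral_ball hint (ha.comp hφ.tendsto_atTop)
    (ENNReal.mul_pos (ENNReal.ofReal_pos.2 hδ).ne' hc.ne') (ρ := 1) (fun k ↦ ?_) hlim'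
  exact (mul_le_mul_left (ENNReal.ofReal_le_ofReal (hδa (φ k))) c).trans (hmass (a (φ k)))

/-- if `ϑ₁ ≺ ϑ₂`, `ϑ₃ ≺ ϑ₂` and `ϑ₃/ϑ₂` does not tend to zero at
infinity, then the inclusion of `A^{p,1,q,r}_{ϑ₁,ϑ₂}(ℝ^d)` into `(L^p_{ϑ₃}, ℓ¹)`
is never compact. -/
theorem A_embedding_never_compact' {d : ℕ} (p q r : ℝ) (hp : 1 < p) (hq : 1 < q) (hr : 1 < r)
    (ϑ₁ ϑ₂ ϑ₃ : (Fin d → ℝ) → ℝ)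
    (h1 : IsBeurling ϑ₁) (h2 : IsBeurling ϑ₂) (h3 : IsBeurling ϑ₃)
    (h12 : Prec ϑ₁ ϑ₂) (h32 : Prec ϑ₃ ϑ₂)
    (hnv : NotVanishingAtInfty (fun x => ϑ₃ x / ϑ₂ x)) :
    ∃ f : ℕ → (Fin d → ℝ) → ℂ,
      (∀ n, MemA p q r ϑ₁ ϑ₂ (f n)) ∧
      (∃ M : ℝ, ∀ n, ANorm p q r ϑ₁ ϑ₂ (f n) ≤ ENNReal.ofReal M) ∧
      ¬ ∃ (φ : ℕ → ℕ) (g : (Fin d → ℝ) → ℂ), StrictMono φ ∧ MemAmalgam p 1 ϑ₃ g ∧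
          Tendsto (fun k => amalgamNorm p 1 ϑ₃ (fun x => f (φ k) x - g x)) atTop (nhds 0) := by
  exact A_embedding_never_compact'_general p q r hp.le (one_pos.trans hq) (one_pos.trans hr)
    ϑ₁ ϑ₂ ϑ₃ h1 h2 h3 h12 hnv
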